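/- Suppose ξᵀL = 0 and let z_k = (x_k, s_k, y_k) ∈ ℝ^{3n} evolve as z_{k+1} = A·z_k. Define the weighted averages x̃_k := γ·Σ_i (ξ_i/r_i)·(x_k)_i, s̃_k := γ·Σ_i ξ_i·(s_k)_i, and ỹ_k := γ·Σ_i ξ_i·(y_k)_i. Then these scalars evolve autonomously according to x̃_{k+1} = x̃_k + τ·s̃_k, s̃_{k+1} = s̃_k − κ₂·ỹ_k, and ỹ_{k+1} = (1−p)·ỹ_k for all k. -/

import Mathlib

open Matrix

/-- The 3n×3n block matrix A = [[I, τR, 0], [−κ₁L, I, −κ₂I], [−pL, 0, (1−p)I]]. -/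
def Amat (n : ℕ) (L R : Matrix (Fin n) (Fin n) ℝ) (τ κ₁ κ₂ p : ℝ) :
    Matrix (Fin 3 × Fin n) (Fin 3 × Fin n) ℝ :=
  Matrix.of fun a b =>
    ![![(1 : Matrix (Fin n) (Fin n) ℝ), τ • R, 0],
      ![(-κ₁) • L, 1, (-κ₂) • (1 : Matrix (Fin n) (Fin n) ℝ)],
      ![(-p) • L, 0, (1 - p) • (1 : Matrix (Fin n) (Fin n) ℝ)]] a.1 b.1 a.2 b.2

/-!
Averaging the three blocks of `z` with weights `w`, `ξ`, `ξ`, where `w R = ξ`, intertwines the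
block matrix `A` with a 3×3 matrix: each block of `A` is a multiple of `1`, of `R` or of `L`, and
`w R = ξ`, `ξ L = 0` turn these into scalars. For diagonal `R` the weights `w i = ξ i / r i` solve
`w R = ξ`, and the normalisation `γ` scales `w` and `ξ` alike.
-/

section BlockAverage

variable {l m o q α : Type*} [Fintype m] [Fintype q]

/-- The vector of weighted block averages of `z`: entry `j` is the `j`-th block of `z` averaged
with the weights `v j`, which are not required to sum to one. -/
def blockAverage [Mul α] [AddCommMonoid α] (v : o → q → α) (z : o × q → α) : o → α :=
  fun j => v j ⬝ᵥ fun k => z (j, k)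

theorem blockAverage_comp_mulVec [NonUnitalSemiring α] [Fintype o]
    {M : Matrix l o (Matrix m q α)} {B : Matrix l o α} {u : l → m → α} {v : o → q → α}
    (h : ∀ i j, u i ᵥ* M i j = B i j • v j) (z : o × q → α) :
    blockAverage u (comp l o m q α M *ᵥ z) = B *ᵥ blockAverage v z := by
  ext i
  have hrow : (fun k => (comp l o m q α M *ᵥ z) (i, k)) = ∑ j, M i j *ᵥ fun k => z (j, k) := by
    ext k
    simp only [mulVec, dotProduct, comp_apply, Fintype.sum_prod_type, Finset.sum_apply]
  calc blockAverage u (comp l o m q α M *ᵥ z) i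
      = ∑ j, (u i ᵥ* M i j) ⬝ᵥ fun k => z (j, k) := by
        simp only [blockAverage, hrow, dotProduct_sum, dotProduct_mulVec]
    _ = (B *ᵥ blockAverage v z) i := by
        simp only [h, smul_dotProduct, smul_eq_mul]
        rfl

end BlockAverage

theorem div_diag_vecMul {ι α : Type*} [Fintype ι] [DivisionSemiring α]
    {R : Matrix ι ι α} (hR : R.IsDiag) (hR₀ : ∀ i, R i i ≠ 0) (ξ : ι → α) :
    (fun i => ξ i / R i i) ᵥ* R = ξ := by
  classical
  ext i
  rw [← hR.diagonal_diag, vecMul_diagonal]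
  simp only [diagonal_apply_eq, diag_apply, div_mul_cancel₀ _ (hR₀ i)]

section Update

variable {ι α : Type*} [Fintype ι] [DecidableEq ι] [CommRing α]

/-- The blocks of the update matrix `A`, over any commutative ring and index type;
`Matrix.comp` flattens them. -/
def updateBlocks (L R : Matrix ι ι α) (τ κ₁ κ₂ p : α) : Matrix (Fin 3) (Fin 3) (Matrix ι ι α) :=
  !![1, τ • R, 0;
     -κ₁ • L, 1, -κ₂ • 1;
     -p • L, 0, (1 - p) • 1]

/-- The 3×3 matrix governing the evolution of the averages `(x̃, s̃, ỹ)`. -/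
def averagedUpdate (τ κ₂ p : α) : Matrix (Fin 3) (Fin 3) α :=
  !![1, τ, 0;
     0, 1, -κ₂;
     0, 0, 1 - p]

theorem vecMul_updateBlocks {L R : Matrix ι ι α} {w ξ : ι → α} (hw : w ᵥ* R = ξ)
    (hξ : ξ ᵥ* L = 0) (τ κ₁ κ₂ p : α) (i j : Fin 3) :
    ![w, ξ, ξ] i ᵥ* updateBlocks L R τ κ₁ κ₂ p i j =
      averagedUpdate τ κ₂ p i j • ![w, ξ, ξ] j := by
  fin_cases i <;> fin_cases j <;>
    simp [updateBlocks, averagedUpdate, vecMul_neg, vecMul_smul, hw, hξ]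

theorem stmt7_general {L R : Matrix ι ι α} {w ξ : ι → α} (hw : w ᵥ* R = ξ) (hξ : ξ ᵥ* L = 0)
    {τ κ₁ κ₂ p : α} {z : ℕ → Fin 3 × ι → α}
    (hz : ∀ k, z (k + 1) = comp _ _ _ _ _ (updateBlocks L R τ κ₁ κ₂ p) *ᵥ z k) (k : ℕ) :
    (∑ i, w i * z (k + 1) (0, i) = ∑ i, w i * z k (0, i) + τ * ∑ i, ξ i * z k (1, i))
      ∧ (∑ i, ξ i * z (k + 1) (1, i) = ∑ i, ξ i * z k (1, i) - κ₂ * ∑ i, ξ i * z k (2, i))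
      ∧ (∑ i, ξ i * z (k + 1) (2, i) = (1 - p) * ∑ i, ξ i * z k (2, i)) := by
  have hstep : blockAverage ![w, ξ, ξ] (z (k + 1)) =
      averagedUpdate τ κ₂ p *ᵥ blockAverage ![w, ξ, ξ] (z k) := by
    rw [hz, blockAverage_comp_mulVec (vecMul_updateBlocks hw hξ τ κ₁ κ₂ p)]
  refine ⟨(congrFun hstep 0).trans ?_, (congrFun hstep 1).trans ?_, (congrFun hstep 2).trans ?_⟩ <;>
    simp [averagedUpdate, blockAverage, mulVec, dotProduct, Fin.sum_univ_three, sub_eq_add_neg]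

end Update

theorem Amat_eq_comp (n : ℕ) (L R : Matrix (Fin n) (Fin n) ℝ) (τ κ₁ κ₂ p : ℝ) :
    Amat n L R τ κ₁ κ₂ p = comp _ _ _ _ _ (updateBlocks L R τ κ₁ κ₂ p) :=
  rfl

theorem stmt7 (n : ℕ) (hn : 1 ≤ n) (L R : Matrix (Fin n) (Fin n) ℝ)
    (hRdiag : ∀ i j, i ≠ j → R i j = 0) (hRpos : ∀ i, 0 < R i i)
    (τ κ₁ κ₂ p : ℝ)
    (ξ : Fin n → ℝ) (hξL : ξ ᵥ* L = 0) (hξ1 : ξ ⬝ᵥ (fun _ => 1) = 1)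
    (γ : ℝ) (hγ : γ⁻¹ = ∑ i, ξ i / R i i)
    (z : ℕ → (Fin 3 × Fin n → ℝ))
    (hz : ∀ k, z (k + 1) = (Amat n L R τ κ₁ κ₂ p) *ᵥ z k) :
    ∀ k : ℕ,
      (γ * ∑ i, (ξ i / R i i) * z (k + 1) (0, i)
          = γ * ∑ i, (ξ i / R i i) * z k (0, i) + τ * (γ * ∑ i, ξ i * z k (1, i)))
      ∧ (γ * ∑ i, ξ i * z (k + 1) (1, i)
          = γ * ∑ i, ξ i * z k (1, i) - κ₂ * (γ * ∑ i, ξ i * z k (2, i)))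
      ∧ (γ * ∑ i, ξ i * z (k + 1) (2, i)
          = (1 - p) * (γ * ∑ i, ξ i * z k (2, i))) := by
  have hw : (γ • fun i => ξ i / R i i) ᵥ* R = γ • ξ := by
    rw [smul_vecMul, div_diag_vecMul hRdiag fun i => (hRpos i).ne']
  simpa only [Pi.smul_apply, smul_eq_mul, mul_assoc, ← Finset.mul_sum] using
    stmt7_general hw (by rw [smul_vecMul, hξL, smul_zero])
      fun k => (hz k).trans (by rw [Amat_eq_comp])
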